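/- Weighted L² boundedness of low-frequency projections (Lemma 2.5, estimate (2.8)). Let D ≥ 1 and let R ≥ 16 be dyadic. There exists a constant C = C(D) such that for every measurable φ : ℝ → ℂ with ‖⟨x⟩^{-D} φ‖_{L¹(ℝ)} < ∞, one has ‖ √σ_R · P_{≤R} φ ‖_{L²(ℝ)} ≤ C ( ‖ √σ_R · φ ‖_{L²(ℝ)} + R^{-D} ‖⟨x⟩^{-D} φ‖_{L¹(ℝ)} ). -/

import Mathlib

open MeasureTheory Real Set ENNReal

noncomputable section

/-- The Japanese bracket `⟨x⟩ = √(1 + x²)`. -/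
def jap (x : ℝ) : ℝ := Real.sqrt (1 + x ^ 2)

/-- The inverse Fourier transform `ǧ(x) = (2π)^{-1/2} ∫ g(ξ) e^{i x ξ} dξ`. -/
def invFourier (g : ℝ → ℝ) (x : ℝ) : ℂ :=
  (Real.sqrt (2 * Real.pi) : ℂ)⁻¹ * ∫ ξ : ℝ, (g ξ : ℂ) * Complex.exp (Complex.I * ((x * ξ : ℝ) : ℂ))

/-- `ρ` is an admissible Littlewood–Paley bump function: smooth, `[0,1]`-valued, equal to `1`
on `[-1,1]` and vanishing outside of `[-9/8, 9/8]`. -/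
def IsLPBump (ρ : ℝ → ℝ) : Prop :=
  ContDiff ℝ (⊤ : ℕ∞) ρ ∧ (∀ ξ, ρ ξ ∈ Set.Icc (0 : ℝ) 1) ∧
    (∀ ξ ∈ Set.Icc (-1 : ℝ) 1, ρ ξ = 1) ∧
    ∀ ξ, ξ ∉ Set.Icc (-(9/8) : ℝ) (9/8) → ρ ξ = 0

/-- The symbol `ρ_{≤N}(ξ) = ρ(ξ/N)`. -/
def rhoLE (ρ : ℝ → ℝ) (N : ℝ) (ξ : ℝ) : ℝ := ρ (ξ / N)

open scoped Classical in
/-- The symbol `ρ_N`: `ρ_1 = ρ_{≤1}` and `ρ_N = ρ_{≤N} - ρ_{≤N/2}` for dyadic `N ≥ 2`. -/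
def rhoD (ρ : ℝ → ℝ) (N : ℝ) (ξ : ℝ) : ℝ :=
  if N = 1 then ρ ξ else ρ (ξ / N) - ρ (2 * ξ / N)

/-- The Littlewood–Paley projection `P_{≤N} φ = ρ̌_{≤N} ∗ φ`. -/
def PLE (ρ : ℝ → ℝ) (N : ℝ) (φ : ℝ → ℂ) (x : ℝ) : ℂ :=
  ∫ y : ℝ, invFourier (rhoLE ρ N) y * φ (x - y)

/-- The Littlewood–Paley projection `P_N φ = ρ̌_N ∗ φ`. -/
def PD (ρ : ℝ → ℝ) (N : ℝ) (φ : ℝ → ℂ) (x : ℝ) : ℂ :=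
  ∫ y : ℝ, invFourier (rhoD ρ N) y * φ (x - y)

/-- The weighted norm `‖⟨x⟩^{-D} φ‖_{L¹(ℝ)}`. -/
def wL1 (D : ℝ) (φ : ℝ → ℂ) : ℝ := ∫ x : ℝ, jap x ^ (-D) * ‖φ x‖

/-- The weight `σ_R(x) = exp(-⟨x/R⟩)`. -/
def sigmaW (R x : ℝ) : ℝ := Real.exp (-jap (x / R))

/-- The weighted `L²`-norm `‖√σ_R · f‖_{L²(ℝ)}`. -/
def wSigmaL2 (R : ℝ) (f : ℝ → ℂ) : ℝ≥0∞ :=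
  eLpNorm (fun x => (Real.sqrt (sigmaW R x) : ℂ) * f x) 2 volume

open scoped FourierTransform SchwartzMap

/-!
The kernel of `P_{≤R}` is `K_R(y) = R F(R y)` with `F = ρ̌` Schwartz. Where `|y| ≤ R`, the weight
`√σ_R` changes by at most a factor `e^{1/2}` under translation by `y`, because the bracket is
1-Lipschitz; this part of the convolution is bounded by Young's inequality with
`‖K_R‖_{L¹} = ‖F‖_{L¹}`. Where `|y| > R`, the decay of `F` gives `K_R(y)` any negative power of
`R` and of `⟨y⟩`, while `√σ_R(x) ≲ R^s ⟨x⟩^{-s}` for every `s > 0`. With Peetre's inequality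
`⟨x - y⟩ ≤ √2 ⟨x⟩ ⟨y⟩` this yields `√σ_R(x) |K_R(y)| ≲ R^{-D} ⟨x⟩^{-1} ⟨x - y⟩^{-D}`; since
`⟨x⟩^{-1}` is square integrable in `x`, this part contributes `R^{-D} ‖⟨x⟩^{-D} φ‖_{L¹}`.
-/

section Young

variable {G : Type*} [MeasurableSpace G] {μ : Measure G} {p : ℝ≥0∞}

lemma eLpNorm_const_mul_le (c : ℝ≥0∞) {f : G → ℝ≥0∞} (hf : AEMeasurable f μ) :
    eLpNorm (fun x => c * f x) p μ ≤ c * eLpNorm f p μ := by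
  rcases eq_or_ne p 0 with rfl | hp0
  · simp
  rcases eq_or_ne p ∞ with rfl | hptop
  · simp only [eLpNorm_exponent_top, eLpNormEssSup, enorm_eq_self, ENNReal.essSup_const_mul,
      le_refl]
  have hp := ENNReal.toReal_pos hp0 hptop
  simp only [eLpNorm_eq_lintegral_rpow_enorm_toReal hp0 hptop, enorm_eq_self,
    ENNReal.mul_rpow_of_nonneg _ _ hp.le]
  rw [lintegral_const_mul'' _ (hf.pow_const _), ENNReal.mul_rpow_of_nonneg _ _ (by positivity),
    one_div, ENNReal.rpow_rpow_inv hp.ne']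

-- Jensen's inequality for the measure with density `k`.
lemma lintegral_mul_rpow_le {r : ℝ} (hr : 1 ≤ r) {k g : G → ℝ≥0∞} (hk : AEMeasurable k μ)
    (hg : AEMeasurable g μ) :
    (∫⁻ y, k y * g y ∂μ) ^ r ≤ (∫⁻ y, k y ∂μ) ^ (r - 1) * ∫⁻ y, k y * g y ^ r ∂μ := by
  have hr0 : 0 < r := by linarith
  have hgk : AEMeasurable g (μ.withDensity k) := hg.mono_ac (withDensity_absolutelyContinuous μ k)
  have holder := eLpNorm'_le_eLpNorm'_mul_rpow_measure_univ one_pos hr hgk.aestronglyMeasurable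
  simp only [eLpNorm'_eq_lintegral_enorm, enorm_eq_self, ENNReal.rpow_one, div_one,
    lintegral_withDensity_eq_lintegral_mul₀ hk hg,
    lintegral_withDensity_eq_lintegral_mul₀ hk (hg.pow_const r), Pi.mul_apply,
    withDensity_apply _ MeasurableSet.univ, Measure.restrict_univ] at holder
  calc (∫⁻ y, k y * g y ∂μ) ^ r
      ≤ ((∫⁻ y, k y * g y ^ r ∂μ) ^ (1 / r) * (∫⁻ y, k y ∂μ) ^ (1 - 1 / r)) ^ r :=
        ENNReal.rpow_le_rpow holder hr0.le
    _ = (∫⁻ y, k y ∂μ) ^ (r - 1) * ∫⁻ y, k y * g y ^ r ∂μ := by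
        rw [ENNReal.mul_rpow_of_nonneg _ _ hr0.le, ← ENNReal.rpow_mul, ← ENNReal.rpow_mul,
          one_div_mul_cancel hr0.ne', ENNReal.rpow_one, sub_mul, one_mul,
          one_div_mul_cancel hr0.ne', mul_comm]

section AddGroup

variable [AddGroup G] [MeasurableAdd₂ G] [MeasurableNeg G] [SFinite μ] [μ.IsAddLeftInvariant]

lemma lintegral_lconvolution {k g : G → ℝ≥0∞} (hk : AEMeasurable k μ) (hg : AEMeasurable g μ) :
    ∫⁻ x, (k ⋆ₗ[μ] g) x ∂μ = (∫⁻ y, k y ∂μ) * ∫⁻ x, g x ∂μ := by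
  simp only [lconvolution_def]
  rw [lintegral_lintegral_swap (by fun_prop)]
  calc ∫⁻ y, ∫⁻ x, k y * g (-y + x) ∂μ ∂μ
      = ∫⁻ y, k y * ∫⁻ x, g x ∂μ ∂μ := lintegral_congr fun y => by
        have hgy : AEMeasurable (fun x => g (-y + x)) μ := hg.comp_quasiMeasurePreserving
          (measurePreserving_add_left μ (-y)).quasiMeasurePreserving
        rw [lintegral_const_mul'' _ hgy, lintegral_add_left_eq_self]
    _ = (∫⁻ y, k y ∂μ) * ∫⁻ x, g x ∂μ := lintegral_mul_const'' _ hk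

theorem eLpNorm_lconvolution_le (hp : 1 ≤ p) {k g : G → ℝ≥0∞} (hk : AEMeasurable k μ)
    (hg : AEMeasurable g μ) :
    eLpNorm (k ⋆ₗ[μ] g) p μ ≤ (∫⁻ y, k y ∂μ) * eLpNorm g p μ := by
  rcases eq_or_ne p ∞ with rfl | hptop
  · refine eLpNormEssSup_le_of_ae_enorm_bound (.of_forall fun x => ?_)
    have hqmp : Measure.QuasiMeasurePreserving (fun y => -y + x) μ μ := by
      simpa only [Function.comp_def, neg_add_rev, neg_neg] using
        (quasiMeasurePreserving_neg μ).comp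
          (measurePreserving_add_left μ (-x)).quasiMeasurePreserving
    have hbound : ∀ᵐ y ∂μ, g (-y + x) ≤ eLpNorm g ∞ μ := hqmp.ae (ae_le_essSup g)
    calc (k ⋆ₗ[μ] g) x ≤ ∫⁻ y, k y * eLpNorm g ∞ μ ∂μ :=
          lintegral_mono_ae (hbound.mono fun y hy => by gcongr)
      _ = (∫⁻ y, k y ∂μ) * eLpNorm g ∞ μ := lintegral_mul_const'' _ hk
  have hp0 : p ≠ 0 := (one_pos.trans_le hp).ne'
  obtain ⟨r, hr⟩ : ∃ r, r = p.toReal := ⟨_, rfl⟩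
  have hr1 : 1 ≤ r := hr ▸ by simpa using ENNReal.toReal_mono hptop hp
  have hr0 : 0 < r := by linarith
  simp only [eLpNorm_eq_lintegral_rpow_enorm_toReal hp0 hptop, enorm_eq_self, ← hr]
  have hpow : ∫⁻ x, (k ⋆ₗ[μ] g) x ^ r ∂μ ≤ (∫⁻ y, k y ∂μ) ^ r * ∫⁻ x, g x ^ r ∂μ := by
    calc ∫⁻ x, (k ⋆ₗ[μ] g) x ^ r ∂μ
        ≤ ∫⁻ x, (∫⁻ y, k y ∂μ) ^ (r - 1) * (k ⋆ₗ[μ] fun z => g z ^ r) x ∂μ :=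
          lintegral_mono fun x => lintegral_mul_rpow_le hr1 hk (by fun_prop)
      _ = (∫⁻ y, k y ∂μ) ^ (r - 1) * ((∫⁻ y, k y ∂μ) * ∫⁻ x, g x ^ r ∂μ) := by
          rw [lintegral_const_mul'' _ (by fun_prop), lintegral_lconvolution hk (by fun_prop)]
      _ = (∫⁻ y, k y ∂μ) ^ r * ∫⁻ x, g x ^ r ∂μ := by
          rw [← mul_assoc]
          nth_rw 2 [← ENNReal.rpow_one (∫⁻ y, k y ∂μ)]
          rw [← ENNReal.rpow_add_of_nonneg _ _ (by linarith) zero_le_one, sub_add_cancel]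
  calc (∫⁻ x, (k ⋆ₗ[μ] g) x ^ r ∂μ) ^ (1 / r)
      ≤ ((∫⁻ y, k y ∂μ) ^ r * ∫⁻ x, g x ^ r ∂μ) ^ (1 / r) := by gcongr
    _ = (∫⁻ y, k y ∂μ) * (∫⁻ x, g x ^ r ∂μ) ^ (1 / r) := by
      rw [ENNReal.mul_rpow_of_nonneg _ _ (by positivity), one_div, ENNReal.rpow_rpow_inv hr0.ne']

end AddGroup

theorem eLpNorm_mul_lconvolution_le [AddCommGroup G] [MeasurableAdd₂ G] [MeasurableNeg G]
    [SFinite μ] [μ.IsAddLeftInvariant] [μ.IsNegInvariant] (hp : 1 ≤ p)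
    {w v K k a f : G → ℝ≥0∞} (hk : AEMeasurable k μ) (ha : AEMeasurable a μ)
    (hw : AEMeasurable (w * f) μ) (hv : AEMeasurable (v * f) μ)
    (h : ∀ x y, w x * K y ≤ k y * w (x - y) + a x * v (x - y)) :
    eLpNorm (w * (K ⋆ₗ[μ] f)) p μ ≤
      (∫⁻ y, k y ∂μ) * eLpNorm (w * f) p μ + (∫⁻ y, v y * f y ∂μ) * eLpNorm a p μ := by
  have hpt (x : G) : w x * (K ⋆ₗ[μ] f) x ≤
      (k ⋆ₗ[μ] (w * f)) x + (∫⁻ y, v y * f y ∂μ) * a x := by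
    calc w x * (K ⋆ₗ[μ] f) x
        ≤ ∫⁻ y, w x * (K y * f (-y + x)) ∂μ := lintegral_const_mul_le _ _
      _ ≤ ∫⁻ y, k y * (w * f) (-y + x) + a x * (v * f) (x - y) ∂μ := lintegral_mono fun y => by
          simp only [neg_add_eq_sub, Pi.mul_apply, ← mul_assoc, ← add_mul]
          exact mul_le_mul_left (h x y) _
      _ = (k ⋆ₗ[μ] (w * f)) x + (∫⁻ y, v y * f y ∂μ) * a x := by
          have hvx : AEMeasurable (fun y => (v * f) (x - y)) μ :=
            hv.comp_quasiMeasurePreserving (quasiMeasurePreserving_sub_left μ x)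
          rw [lintegral_add_right' _ (hvx.const_mul _), lintegral_const_mul'' _ hvx,
            lintegral_sub_left_eq_self (v * f) x, mul_comm (a x)]
          rfl
  calc eLpNorm (w * (K ⋆ₗ[μ] f)) p μ
      ≤ eLpNorm (k ⋆ₗ[μ] (w * f) + fun x => (∫⁻ y, v y * f y ∂μ) * a x) p μ :=
        eLpNorm_mono_enorm hpt
    _ ≤ eLpNorm (k ⋆ₗ[μ] (w * f)) p μ + eLpNorm (fun x => (∫⁻ y, v y * f y ∂μ) * a x) p μ :=
        eLpNorm_add_le (aemeasurable_lconvolution hk hw).aestronglyMeasurable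
          (ha.const_mul _).aestronglyMeasurable hp
    _ ≤ _ := add_le_add (eLpNorm_lconvolution_le hp hk hw) (eLpNorm_const_mul_le _ ha)

end Young

lemma one_le_jap (x : ℝ) : 1 ≤ jap x :=
  Real.one_le_sqrt.2 (le_add_of_nonneg_right (sq_nonneg x))

lemma jap_pos (x : ℝ) : 0 < jap x := zero_lt_one.trans_le (one_le_jap x)

lemma jap_sq (x : ℝ) : jap x ^ 2 = 1 + x ^ 2 := Real.sq_sqrt (by positivity)

lemma abs_le_jap (x : ℝ) : |x| ≤ jap x := Real.abs_le_sqrt (by linarith)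

@[fun_prop]
lemma continuous_jap : Continuous jap := by
  unfold jap
  fun_prop

lemma jap_le_jap_add_abs_sub (x y : ℝ) : jap x ≤ jap y + |x - y| := by
  refine Real.sqrt_le_iff.2 ⟨add_nonneg (jap_pos y).le (abs_nonneg _), ?_⟩
  have hcross : y * (x - y) ≤ jap y * |x - y| :=
    calc y * (x - y) ≤ |y| * |x - y| := abs_mul y _ ▸ le_abs_self _
      _ ≤ jap y * |x - y| := by gcongr; exact abs_le_jap y
  nlinarith [jap_sq y, sq_abs (x - y)]

lemma jap_sub_le (x y : ℝ) : jap (x - y) ≤ √2 * jap x * jap y := by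
  have hx := jap_pos x
  have hy := jap_pos y
  refine Real.sqrt_le_iff.2 ⟨by positivity, ?_⟩
  rw [mul_pow, mul_pow, Real.sq_sqrt zero_le_two, jap_sq, jap_sq]
  nlinarith [sq_nonneg (x + y), mul_nonneg (sq_nonneg x) (sq_nonneg y)]

lemma jap_sub_rpow_le (s x y : ℝ) : jap (x - y) ^ s ≤ (√2 * jap x * jap y) ^ |s| :=
  calc jap (x - y) ^ s ≤ jap (x - y) ^ |s| :=
        Real.rpow_le_rpow_of_exponent_le (one_le_jap _) (le_abs_self s)
    _ ≤ (√2 * jap x * jap y) ^ |s| :=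
        Real.rpow_le_rpow (jap_pos _).le (jap_sub_le x y) (abs_nonneg s)

lemma jap_le_sqrt_two_mul_abs {x : ℝ} (hx : 1 ≤ |x|) : jap x ≤ √2 * |x| := by
  have hx2 : 1 ≤ x ^ 2 := (one_le_sq_iff_one_le_abs x).2 hx
  refine Real.sqrt_le_iff.2 ⟨by positivity, ?_⟩
  rw [mul_pow, Real.sq_sqrt zero_le_two, sq_abs]
  linarith

lemma jap_le_mul_jap_div {R : ℝ} (hR : 1 ≤ R) (x : ℝ) : jap x ≤ R * jap (x / R) := by
  have hR0 : 0 < R := by linarith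
  refine Real.sqrt_le_iff.2 ⟨mul_nonneg hR0.le (jap_pos _).le, ?_⟩
  rw [mul_pow, jap_sq, mul_add, ← mul_pow, mul_div_cancel₀ _ hR0.ne', mul_one]
  gcongr
  exact one_le_pow₀ hR

lemma memLp_two_inv_jap : MemLp (fun x => (jap x)⁻¹) 2 volume := by
  have hcont : Continuous fun x => (jap x)⁻¹ := continuous_jap.inv₀ fun x => (jap_pos x).ne'
  rw [memLp_two_iff_integrable_sq hcont.aestronglyMeasurable]
  simpa only [inv_pow, jap_sq] using integrable_inv_one_add_sq

@[fun_prop]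
lemma continuous_sigmaW (R : ℝ) : Continuous (sigmaW R) := by
  unfold sigmaW
  fun_prop

lemma sqrt_sigmaW (R x : ℝ) : √(sigmaW R x) = Real.exp (-(jap (x / R) / 2)) := by
  rw [sigmaW, ← Real.exp_half, neg_div]

lemma sqrt_sigmaW_le_of_abs_le {R : ℝ} (hR : 0 < R) {x y : ℝ} (hy : |y| ≤ R) :
    √(sigmaW R x) ≤ Real.exp (1 / 2) * √(sigmaW R (x - y)) := by
  rw [sqrt_sigmaW, sqrt_sigmaW, ← Real.exp_add, Real.exp_le_exp]
  have hlip := jap_le_jap_add_abs_sub ((x - y) / R) (x / R)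
  have hdist : |(x - y) / R - x / R| ≤ 1 := by
    rw [← sub_div, sub_sub_cancel_left, abs_div, abs_neg, abs_of_pos hR]
    exact (div_le_one hR).2 hy
  linarith

lemma rpow_le_mul_exp_mul {b s t : ℝ} (hb : 0 < b) (hs : 0 < s) (ht : 0 ≤ t) :
    t ^ s ≤ (s / b) ^ s * Real.exp (b * t) := by
  have hlin : t ≤ s / b * Real.exp (b * t / s) := by
    rw [← div_le_iff₀' (by positivity), div_div_eq_mul_div, mul_comm t]
    linarith [Real.add_one_le_exp (b * t / s)]
  calc t ^ s ≤ (s / b * Real.exp (b * t / s)) ^ s := by gcongr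
    _ = (s / b) ^ s * Real.exp (b * t) := by
      rw [Real.mul_rpow (by positivity) (by positivity), ← Real.exp_mul, div_mul_cancel₀ _ hs.ne']

lemma sqrt_sigmaW_le_rpow {R s : ℝ} (hR : 1 ≤ R) (hs : 0 < s) (x : ℝ) :
    √(sigmaW R x) ≤ (2 * s) ^ s * R ^ s * jap x ^ (-s) := by
  have hx := jap_pos x
  have hR0 : 0 < R := by linarith
  have hjap : jap x ^ s ≤ (2 * s) ^ s * R ^ s * Real.exp (jap (x / R) / 2) :=
    calc jap x ^ s ≤ (R * jap (x / R)) ^ s := by gcongr; exact jap_le_mul_jap_div hR x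
      _ = R ^ s * jap (x / R) ^ s := Real.mul_rpow hR0.le (jap_pos _).le
      _ ≤ R ^ s * ((s / (1 / 2)) ^ s * Real.exp (1 / 2 * jap (x / R))) := by
        gcongr
        exact rpow_le_mul_exp_mul one_half_pos hs (jap_pos _).le
      _ = (2 * s) ^ s * R ^ s * Real.exp (jap (x / R) / 2) := by
        ring_nf
  rwa [sqrt_sigmaW, Real.exp_neg, Real.rpow_neg hx.le, ← div_eq_mul_inv,
    le_div_iff₀ (by positivity), inv_mul_le_iff₀ (Real.exp_pos _), mul_comm]

section Kernel

variable {E : Type*} [NormedAddCommGroup E] [NormedSpace ℝ E]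

lemma exists_norm_le_mul_rpow_neg {V : Type*} [NormedAddCommGroup V] [NormedSpace ℝ V]
    (F : 𝓢(V, E)) (s : ℝ) :
    ∃ B : ℝ, 0 ≤ B ∧ ∀ z, 1 ≤ ‖z‖ → ‖F z‖ ≤ B * ‖z‖ ^ (-s) := by
  obtain ⟨m, hm⟩ := exists_nat_ge s
  obtain ⟨B, hB, hF⟩ := F.decay m 0
  refine ⟨B, hB.le, fun z hz => ?_⟩
  have hz0 : 0 < ‖z‖ := by linarith
  have hpow : ‖z‖ ^ s ≤ ‖z‖ ^ m := by
    rw [← Real.rpow_natCast]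
    exact Real.rpow_le_rpow_of_exponent_le hz hm
  have hdecay := hF z
  rw [norm_iteratedFDeriv_zero] at hdecay
  rw [Real.rpow_neg hz0.le, ← div_eq_mul_inv, le_div_iff₀' (by positivity)]
  exact (mul_le_mul_of_nonneg_right hpow (norm_nonneg _)).trans hdecay

lemma exists_norm_dilate_le (F : 𝓢(ℝ, E)) {s : ℝ} (hs : 0 ≤ s) :
    ∃ B : ℝ, 0 ≤ B ∧ ∀ R : ℝ, 1 ≤ R → ∀ y : ℝ, 1 ≤ |y| →
      R * ‖F (R * y)‖ ≤ B * R ^ (-(2 * s + 1)) * jap y ^ (-s) := by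
  obtain ⟨B, hB, hF⟩ := exists_norm_le_mul_rpow_neg F (2 * s + 2)
  refine ⟨B * √2 ^ s, by positivity, fun R hR y hy => ?_⟩
  have hR0 : 0 < R := by linarith
  have hy0 : 0 < |y| := by linarith
  have hyj := jap_pos y
  have hRy : ‖R * y‖ = R * |y| := by rw [norm_mul, Real.norm_of_nonneg hR0.le, Real.norm_eq_abs]
  have hdecay := hF (R * y) (hRy ▸ one_le_mul_of_one_le_of_one_le hR hy)
  have hR_pow : R * R ^ (-(2 * s + 2)) = R ^ (-(2 * s + 1)) := by
    rw [← Real.rpow_one_add' hR0.le (by linarith)]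
    ring_nf
  have hy_pow : |y| ^ (-(2 * s + 2)) ≤ √2 ^ s * jap y ^ (-s) :=
    calc |y| ^ (-(2 * s + 2)) ≤ |y| ^ (-s) :=
          Real.rpow_le_rpow_of_exponent_le hy (by linarith)
      _ ≤ √2 ^ s * jap y ^ (-s) := by
          rw [Real.rpow_neg hy0.le, Real.rpow_neg hyj.le, ← div_eq_mul_inv,
            inv_le_iff_one_le_mul₀ (by positivity), div_mul_eq_mul_div, one_le_div (by positivity),
            ← Real.mul_rpow (by positivity) hy0.le]
          gcongr
          exact jap_le_sqrt_two_mul_abs hy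
  calc R * ‖F (R * y)‖ ≤ R * (B * (R * |y|) ^ (-(2 * s + 2))) := by
        gcongr
        exact hRy ▸ hdecay
    _ = B * (R * R ^ (-(2 * s + 2))) * |y| ^ (-(2 * s + 2)) := by
        rw [Real.mul_rpow hR0.le hy0.le]
        ring
    _ ≤ B * R ^ (-(2 * s + 1)) * (√2 ^ s * jap y ^ (-s)) := by
        rw [hR_pow]
        gcongr
    _ = B * √2 ^ s * R ^ (-(2 * s + 1)) * jap y ^ (-s) := by ring

lemma exists_sqrt_sigmaW_mul_norm_dilate_le (F : 𝓢(ℝ, E)) (D : ℝ) :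
    ∃ A : ℝ, 0 ≤ A ∧ ∀ R : ℝ, 1 ≤ R → ∀ x y : ℝ, 1 ≤ |y| →
      √(sigmaW R x) * (R * ‖F (R * y)‖) ≤ A * R ^ (-D) * (jap x)⁻¹ * jap (x - y) ^ (-D) := by
  obtain ⟨s, hs⟩ : ∃ s, s = |D| := ⟨_, rfl⟩
  have hs0 : 0 ≤ s := hs ▸ abs_nonneg D
  obtain ⟨B, hB, hF⟩ := exists_norm_dilate_le F hs0
  refine ⟨(2 * (s + 1)) ^ (s + 1) * B * √2 ^ s, by positivity, fun R hR x y hy => ?_⟩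
  have hR0 : 0 < R := by linarith
  have hx := jap_pos x
  have hyj := jap_pos y
  have hxy := jap_pos (x - y)
  have hpeetre : 1 ≤ √2 ^ s * jap x ^ s * jap y ^ s * jap (x - y) ^ (-D) := by
    rw [Real.rpow_neg hxy.le, ← div_eq_mul_inv, one_le_div (by positivity),
      ← Real.mul_rpow (by positivity) hx.le, ← Real.mul_rpow (by positivity) hyj.le, hs]
    exact jap_sub_rpow_le D x y
  have hR_pow : R ^ (s + 1) * R ^ (-(2 * s + 1)) ≤ R ^ (-D) := by
    rw [← Real.rpow_add hR0]
    exact Real.rpow_le_rpow_of_exponent_le hR (by linarith [le_abs_self D])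
  have hx_pow : jap x ^ (-(s + 1)) * jap x ^ s = (jap x)⁻¹ := by
    rw [← Real.rpow_add hx, ← Real.rpow_neg_one]
    ring_nf
  have hy_pow : jap y ^ (-s) * jap y ^ s = 1 := by
    rw [← Real.rpow_add hyj, neg_add_cancel, Real.rpow_zero]
  calc √(sigmaW R x) * (R * ‖F (R * y)‖)
      ≤ (2 * (s + 1)) ^ (s + 1) * R ^ (s + 1) * jap x ^ (-(s + 1)) *
          (B * R ^ (-(2 * s + 1)) * jap y ^ (-s)) *
          (√2 ^ s * jap x ^ s * jap y ^ s * jap (x - y) ^ (-D)) :=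
        (mul_le_mul (sqrt_sigmaW_le_rpow hR (by linarith) x) (hF R hR y hy) (by positivity)
          (by positivity)).trans (le_mul_of_one_le_right (by positivity) hpeetre)
    _ = (2 * (s + 1)) ^ (s + 1) * B * √2 ^ s * (R ^ (s + 1) * R ^ (-(2 * s + 1))) *
          (jap x ^ (-(s + 1)) * jap x ^ s) * jap (x - y) ^ (-D) * (jap y ^ (-s) * jap y ^ s) := by
        ring
    _ ≤ (2 * (s + 1)) ^ (s + 1) * B * √2 ^ s * R ^ (-D) * (jap x)⁻¹ * jap (x - y) ^ (-D) := by
        rw [hx_pow, hy_pow, mul_one]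
        gcongr

end Kernel

lemma IsLPBump.exists_schwartzMap {ρ : ℝ → ℝ} (hρ : IsLPBump ρ) : ∃ f : 𝓢(ℝ, ℝ), ⇑f = ρ := by
  obtain ⟨hsmooth, -, -, hzero⟩ := hρ
  have hsupp : HasCompactSupport ρ := HasCompactSupport.intro isCompact_Icc hzero
  exact ⟨hsupp.toSchwartzMap hsmooth, rfl⟩

lemma invFourier_rhoLE (ρ : ℝ → ℝ) {R : ℝ} (hR : 0 < R) (y : ℝ) :
    invFourier (rhoLE ρ R) y = R * invFourier ρ (R * y) := by
  have hscale := Measure.integral_comp_div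
    (fun ξ : ℝ => (ρ ξ : ℂ) * Complex.exp (Complex.I * ((R * y * ξ : ℝ) : ℂ))) R
  have hcancel (ξ : ℝ) : R * y * (ξ / R) = y * ξ := by field_simp
  simp only [hcancel, abs_of_pos hR, Complex.real_smul] at hscale
  simp only [invFourier, rhoLE, hscale, mul_left_comm]

lemma exists_schwartzMap_eq_invFourier (ρ : 𝓢(ℝ, ℝ)) : ∃ F : 𝓢(ℝ, ℂ), ⇑F = invFourier ρ := by
  let scale : ℝ ≃L[ℝ] ℝ :=
    ContinuousLinearEquiv.unitsEquivAut ℝ (Units.mk0 (2 * π)⁻¹ (by positivity))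
  let ρℂ : 𝓢(ℝ, ℂ) := ρ.postcompCLM Complex.ofRealCLM
  refine ⟨(√(2 * π) : ℂ)⁻¹ • SchwartzMap.compCLMOfContinuousLinearEquiv ℂ scale (𝓕⁻ ρℂ),
    funext fun x => ?_⟩
  have hphase (ξ : ℝ) : 2 * π * (inner ℝ ξ (scale x)) = x * ξ := by
    change 2 * π * (x * (2 * π)⁻¹ * ξ) = x * ξ
    field_simp
  change (√(2 * π) : ℂ)⁻¹ * 𝓕⁻ ρℂ (scale x) = invFourier ρ x
  rw [SchwartzMap.fourierInv_coe, Real.fourierInv_eq', invFourier]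
  congr 1
  refine integral_congr_ae (.of_forall fun ξ => ?_)
  simp only [hphase, smul_eq_mul]
  rw [mul_comm, mul_comm Complex.I]
  rfl

lemma continuous_invFourier_rhoLE (ρ : 𝓢(ℝ, ℝ)) {R : ℝ} (hR : 0 < R) :
    Continuous (invFourier (rhoLE ρ R)) := by
  obtain ⟨F, hF⟩ := exists_schwartzMap_eq_invFourier ρ
  simp only [funext (invFourier_rhoLE ρ hR), ← hF]
  exact continuous_const.mul (F.continuous.comp (continuous_const_mul R))

lemma lintegral_comp_mul_left {c : ℝ} (hc : c ≠ 0) (g : ℝ → ℝ≥0∞) :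
    ∫⁻ y, g (c * y) = ENNReal.ofReal |c⁻¹| * ∫⁻ y, g y := by
  rw [← smul_eq_mul, ← lintegral_smul_measure, ← Real.map_volume_mul_left hc]
  exact (lintegral_map_equiv g (Homeomorph.mulLeft₀ c hc).toMeasurableEquiv).symm

lemma lintegral_enorm_invFourier_rhoLE (ρ : ℝ → ℝ) {R : ℝ} (hR : 0 < R) :
    ∫⁻ y, ‖invFourier (rhoLE ρ R) y‖ₑ = ∫⁻ y, ‖invFourier ρ y‖ₑ := by
  simp only [invFourier_rhoLE ρ hR, enorm_mul]
  rw [lintegral_const_mul' _ _ enorm_ne_top,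
    lintegral_comp_mul_left hR.ne' fun z => ‖invFourier ρ z‖ₑ, ← mul_assoc, ← ofReal_norm,
    Complex.norm_real, Real.norm_of_nonneg hR.le, abs_of_pos (by positivity),
    ← ENNReal.ofReal_mul hR.le, mul_inv_cancel₀ hR.ne', ENNReal.ofReal_one, one_mul]

lemma exists_sqrt_sigmaW_mul_kernel_le (ρ : 𝓢(ℝ, ℝ)) (D : ℝ) :
    ∃ A : ℝ, 0 ≤ A ∧ ∀ R : ℝ, 1 ≤ R → ∀ x y : ℝ,
      √(sigmaW R x) * ‖invFourier (rhoLE ρ R) y‖ ≤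
        Real.exp (1 / 2) * ‖invFourier (rhoLE ρ R) y‖ * √(sigmaW R (x - y)) +
          A * R ^ (-D) * (jap x)⁻¹ * jap (x - y) ^ (-D) := by
  obtain ⟨F, hF⟩ := exists_schwartzMap_eq_invFourier ρ
  obtain ⟨A, hA, hfar⟩ := exists_sqrt_sigmaW_mul_norm_dilate_le F D
  refine ⟨A, hA, fun R hR x y => ?_⟩
  have hR0 : 0 < R := by linarith
  have hx := jap_pos x
  have hxy := jap_pos (x - y)
  rcases le_or_gt |y| R with hy | hy
  · refine le_add_of_le_of_nonneg ?_ (by positivity)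
    calc √(sigmaW R x) * ‖invFourier (rhoLE ρ R) y‖
        ≤ Real.exp (1 / 2) * √(sigmaW R (x - y)) * ‖invFourier (rhoLE ρ R) y‖ := by
          gcongr
          exact sqrt_sigmaW_le_of_abs_le hR0 hy
      _ = Real.exp (1 / 2) * ‖invFourier (rhoLE ρ R) y‖ * √(sigmaW R (x - y)) :=
          mul_right_comm _ _ _
  · refine le_add_of_nonneg_of_le (by positivity) ?_
    rw [invFourier_rhoLE ρ hR0, norm_mul, Complex.norm_real, Real.norm_of_nonneg hR0.le, ← hF]
    exact hfar R hR x y (hR.trans hy.le)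

lemma enorm_PLE_le (ρ : ℝ → ℝ) (R : ℝ) (φ : ℝ → ℂ) (x : ℝ) :
    ‖PLE ρ R φ x‖ₑ ≤ ((fun y => ‖invFourier (rhoLE ρ R) y‖ₑ) ⋆ₗ fun y => ‖φ y‖ₑ) x := by
  refine (enorm_integral_le_lintegral_enorm _).trans_eq ?_
  simp only [enorm_mul, lconvolution_def, neg_add_eq_sub]

lemma wSigmaL2_eq_eLpNorm_mul_enorm (R : ℝ) (f : ℝ → ℂ) :
    wSigmaL2 R f = eLpNorm ((fun x => ENNReal.ofReal √(sigmaW R x)) * fun x => ‖f x‖ₑ) 2 := by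
  rw [wSigmaL2, ← eLpNorm_enorm]
  congr 1
  funext x
  rw [Pi.mul_apply, enorm_mul, ← ofReal_norm (√(sigmaW R x) : ℂ), Complex.norm_real,
    Real.norm_of_nonneg (Real.sqrt_nonneg _)]

lemma ofReal_wL1 {D : ℝ} {φ : ℝ → ℂ} (hφ : Integrable fun x => jap x ^ (-D) * ‖φ x‖) :
    ENNReal.ofReal (wL1 D φ) = ∫⁻ x, ENNReal.ofReal (jap x ^ (-D)) * ‖φ x‖ₑ := by
  have hjap (x : ℝ) : 0 ≤ jap x ^ (-D) := Real.rpow_nonneg (jap_pos x).le _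
  rw [wL1, ofReal_integral_eq_lintegral_ofReal hφ
    (.of_forall fun x => mul_nonneg (hjap x) (norm_nonneg _))]
  simp only [ENNReal.ofReal_mul (hjap _), ofReal_norm]

lemma exists_ofReal_sqrt_sigmaW_mul_enorm_kernel_le (ρ : 𝓢(ℝ, ℝ)) (D : ℝ) :
    ∃ A : ℝ, ∀ R : ℝ, 1 ≤ R → ∀ x y : ℝ,
      ENNReal.ofReal √(sigmaW R x) * ‖invFourier (rhoLE ρ R) y‖ₑ ≤
        ENNReal.ofReal (Real.exp (1 / 2)) * ‖invFourier (rhoLE ρ R) y‖ₑ *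
            ENNReal.ofReal √(sigmaW R (x - y)) +
          ENNReal.ofReal (A * R ^ (-D)) * ‖(jap x)⁻¹‖ₑ * ENNReal.ofReal (jap (x - y) ^ (-D)) := by
  obtain ⟨A, hA, hkernel⟩ := exists_sqrt_sigmaW_mul_kernel_le ρ D
  refine ⟨A, fun R hR x y => ?_⟩
  have hx := jap_pos x
  have hxy := jap_pos (x - y)
  have : 0 < R := by linarith
  rw [← ofReal_norm, ← ofReal_norm, Real.norm_of_nonneg (inv_nonneg.2 hx.le),
    ← ENNReal.ofReal_mul (by positivity), ← ENNReal.ofReal_mul (by positivity),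
    ← ENNReal.ofReal_mul (by positivity), ← ENNReal.ofReal_mul (by positivity),
    ← ENNReal.ofReal_mul (by positivity), ← ENNReal.ofReal_add (by positivity) (by positivity)]
  exact ENNReal.ofReal_le_ofReal (hkernel R hR x y)

theorem exists_wSigmaL2_PLE_le (ρ : 𝓢(ℝ, ℝ)) (D : ℝ) :
    ∃ A : ℝ, ∀ R : ℝ, 1 ≤ R → ∀ φ : ℝ → ℂ, AEStronglyMeasurable φ →
      Integrable (fun x => jap x ^ (-D) * ‖φ x‖) →
        wSigmaL2 R (PLE ρ R φ) ≤
          ENNReal.ofReal (Real.exp (1 / 2)) * (∫⁻ y, ‖invFourier ρ y‖ₑ) * wSigmaL2 R φ +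
            ENNReal.ofReal (wL1 D φ) *
              (ENNReal.ofReal (A * R ^ (-D)) * eLpNorm (fun x => (jap x)⁻¹) 2) := by
  obtain ⟨A, hkernel⟩ := exists_ofReal_sqrt_sigmaW_mul_enorm_kernel_le ρ D
  refine ⟨A, fun R hR φ hφ hint => ?_⟩
  have hR0 : 0 < R := by linarith
  have hK : Measurable fun y => ‖invFourier (rhoLE ρ R) y‖ₑ :=
    (continuous_invFourier_rhoLE ρ hR0).measurable.enorm
  have ha : Measurable fun x => ‖(jap x)⁻¹‖ₑ := continuous_jap.measurable.inv.enorm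
  have hσ : Measurable fun x => ENNReal.ofReal √(sigmaW R x) := by fun_prop
  have hv : Measurable fun x => ENNReal.ofReal (jap x ^ (-D)) :=
    (continuous_jap.measurable.pow_const _).ennreal_ofReal
  have hyoung := eLpNorm_mul_lconvolution_le (p := 2) one_le_two
    (hK.const_mul (ENNReal.ofReal (Real.exp (1 / 2)))).aemeasurable
    (ha.const_mul (ENNReal.ofReal (A * R ^ (-D)))).aemeasurable (hσ.aemeasurable.mul hφ.enorm)
    (hv.aemeasurable.mul hφ.enorm) (hkernel R hR)
  rw [lintegral_const_mul _ hK, lintegral_enorm_invFourier_rhoLE _ hR0, ← ofReal_wL1 hint,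
    ← wSigmaL2_eq_eLpNorm_mul_enorm] at hyoung
  rw [wSigmaL2_eq_eLpNorm_mul_enorm R (PLE ρ R φ), ← eLpNorm_enorm fun x => (jap x)⁻¹]
  refine (eLpNorm_mono_enorm fun x => ?_).trans (hyoung.trans ?_)
  · exact mul_le_mul_right (enorm_PLE_le ρ R φ x) _
  · gcongr
    exact eLpNorm_const_mul_le _ ha.aemeasurable

theorem PLE_weighted_L2_general (ρ : 𝓢(ℝ, ℝ)) (D : ℝ) :
    ∃ C : ℝ, 0 < C ∧ ∀ R : ℝ, 1 ≤ R → ∀ φ : ℝ → ℂ, AEStronglyMeasurable φ →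
      Integrable (fun x => jap x ^ (-D) * ‖φ x‖) →
        wSigmaL2 R (PLE ρ R φ) ≤
          ENNReal.ofReal C *
            (wSigmaL2 R φ + ENNReal.ofReal (R ^ (-D)) * ENNReal.ofReal (wL1 D φ)) := by
  obtain ⟨A, hA⟩ := exists_wSigmaL2_PLE_le ρ D
  obtain ⟨F, hF⟩ := exists_schwartzMap_eq_invFourier ρ
  obtain ⟨M, hM⟩ : ∃ M, M = ENNReal.ofReal (Real.exp (1 / 2)) * ∫⁻ y, ‖invFourier ρ y‖ₑ :=
    ⟨_, rfl⟩
  obtain ⟨L, hL⟩ : ∃ L, L = ENNReal.ofReal A * eLpNorm (fun x => (jap x)⁻¹) 2 := ⟨_, rfl⟩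
  have hM_top : M ≠ ∞ :=
    hM ▸ ENNReal.mul_ne_top ENNReal.ofReal_ne_top (hF ▸ F.integrable.hasFiniteIntegral.ne)
  have hL_top : L ≠ ∞ :=
    hL ▸ ENNReal.mul_ne_top ENNReal.ofReal_ne_top memLp_two_inv_jap.eLpNorm_ne_top
  refine ⟨(M + L).toReal + 1, by positivity, fun R hR φ hφ hint => ?_⟩
  have hC : M + L ≤ ENNReal.ofReal ((M + L).toReal + 1) :=
    (ENNReal.ofReal_toReal (ENNReal.add_ne_top.2 ⟨hM_top, hL_top⟩)).ge.trans
      (ENNReal.ofReal_le_ofReal (le_add_of_nonneg_right zero_le_one))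
  calc wSigmaL2 R (PLE ρ R φ)
      ≤ M * wSigmaL2 R φ + L * (ENNReal.ofReal (R ^ (-D)) * ENNReal.ofReal (wL1 D φ)) := by
        refine (hA R hR φ hφ hint).trans_eq ?_
        rw [ENNReal.ofReal_mul' (by positivity), hM, hL]
        ring
    _ ≤ (M + L) * wSigmaL2 R φ +
          (M + L) * (ENNReal.ofReal (R ^ (-D)) * ENNReal.ofReal (wL1 D φ)) := by
        gcongr
        exacts [le_self_add, le_add_self]
    _ ≤ _ := by
        rw [← mul_add]
        gcongr

/-- **Weighted `L²` boundedness of low-frequency projections** (Lemma 2.5, estimate (2.8)). -/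
theorem PLE_weighted_L2 (ρ : ℝ → ℝ) (hρ : IsLPBump ρ) (D : ℝ) (hD : 1 ≤ D) :
    ∃ C : ℝ, 0 < C ∧
      ∀ R : ℝ, 16 ≤ R → (∃ k : ℕ, R = 2 ^ k) →
        ∀ φ : ℝ → ℂ, Measurable φ → Integrable (fun x => jap x ^ (-D) * ‖φ x‖) →
          wSigmaL2 R (PLE ρ R φ) ≤
            ENNReal.ofReal C *
              (wSigmaL2 R φ + ENNReal.ofReal (R ^ (-D)) * ENNReal.ofReal (wL1 D φ)) := by
  obtain ⟨f, rfl⟩ := hρ.exists_schwartzMap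
  obtain ⟨C, hC, hbound⟩ := PLE_weighted_L2_general f D
  exact ⟨C, hC, fun R hR _ φ hφ => hbound R (by linarith) φ hφ.aestronglyMeasurable⟩
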